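/- arXiv:2404.09413 — 2 statements merged into one kernel-verified Lean document; each statement's English description precedes it below -/
import Mathlib

section
/- Let α ∈ (0,1] and let μ = (μ₁, μ₂) ∈ ℝ² satisfy ‖μ‖₁ = |μ₁| + |μ₂| ≤ 1. Let P₀ = Lap_2(0, α⁻¹) be the centered bivariate Laplace distribution with independent coordinates, and let P_{±μ} = ½·Lap_2(μ, α⁻¹) + ½·Lap_2(−μ, α⁻¹) be the symmetric two-component mixture of bivariate Laplace distributions with the same scale. Then the Kullback–Leibler divergence satisfies KL(P_{±μ} ‖ P₀) ≤ 16.7 · α³ · ‖μ‖₁³. -/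
open MeasureTheory Real
open scoped ENNReal

/-- The Laplace distribution on `ℝ` with mean `m` and scale parameter `b`. -/
noncomputable def Lap1' (m b : ℝ) : Measure ℝ :=
  volume.withDensity (fun x => ENNReal.ofReal ((2 * b)⁻¹ * Real.exp (-|x - m| / b)))

/-- The bivariate Laplace distribution with independent coordinates,
mean `(m₁, m₂)` and common scale `b`. -/
noncomputable def Lap2' (m₁ m₂ b : ℝ) : Measure (ℝ × ℝ) :=
  (Lap1' m₁ b).prod (Lap1' m₂ b)

/-- A function which is exponential on each of `(-∞, 0]`, `(0, a]` and `(a, ∞)`. -/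
lemma integrable_and_integral_of_eq_exp_pieces {f : ℝ → ℝ} {a p k q u v w : ℝ} (ha : 0 ≤ a)
    (hp : 0 < p) (hk : 0 < k) (hq : 0 < q)
    (h₁ : ∀ x ≤ 0, f x = u * exp (p * x))
    (h₂ : ∀ x, 0 < x → x ≤ a → f x = v * exp (k * x))
    (h₃ : ∀ x, a < x → f x = w * exp (-q * x)) :
    Integrable f ∧
      ∫ x, f x = u / p + v * (exp (k * a) - 1) / k + w * exp (-q * a) / q := by
  have e₁ : Set.EqOn (fun x => u * exp (p * x)) f (Set.Iic 0) := fun x hx => (h₁ x hx).symm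
  have e₂ : Set.EqOn (fun x => v * exp (k * x)) f (Set.Ioc 0 a) :=
    fun x hx => (h₂ x hx.1 hx.2).symm
  have e₃ : Set.EqOn (fun x => w * exp (-q * x)) f (Set.Ioi a) := fun x hx => (h₃ x hx).symm
  have j₁ : IntegrableOn f (Set.Iic 0) :=
    IntegrableOn.congr_fun ((integrableOn_exp_mul_Iic hp 0).const_mul u) e₁ measurableSet_Iic
  have j₂ : IntegrableOn f (Set.Ioc 0 a) :=
    ((Continuous.integrableOn_Icc (by fun_prop)).mono_set Set.Ioc_subset_Icc_self).congr_fun e₂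
      measurableSet_Ioc
  have j₃ : IntegrableOn f (Set.Ioi a) :=
    IntegrableOn.congr_fun ((integrableOn_exp_mul_Ioi (neg_lt_zero.2 hq) a).const_mul w) e₃
      measurableSet_Ioi
  have hU : Set.Ioc 0 a ∪ Set.Ioi a = Set.Ioi 0 := Set.Ioc_union_Ioi_eq_Ioi ha
  have j₄ : IntegrableOn f (Set.Ioi 0) := hU ▸ j₂.union j₃
  refine ⟨?_, ?_⟩
  · rw [← integrableOn_univ, ← Set.Iic_union_Ioi (a := (0 : ℝ))]
    exact j₁.union j₄
  · have i₁ : ∫ x in Set.Iic 0, f x = u / p := by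
      rw [← setIntegral_congr_fun measurableSet_Iic e₁, integral_const_mul,
        integral_exp_mul_Iic hp]
      simp [div_eq_mul_inv]
    have i₂ : ∫ x in Set.Ioc 0 a, f x = v * (exp (k * a) - 1) / k := by
      rw [← setIntegral_congr_fun measurableSet_Ioc e₂, integral_const_mul,
        ← intervalIntegral.integral_of_le ha,
        intervalIntegral.integral_comp_mul_left (fun x => exp x) hk.ne', integral_exp]
      simp
      ring
    have i₃ : ∫ x in Set.Ioi a, f x = w * exp (-q * a) / q := by
      rw [← setIntegral_congr_fun measurableSet_Ioi e₃, integral_const_mul,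
        integral_exp_mul_Ioi (neg_lt_zero.2 hq)]
      rw [neg_div_neg_eq, mul_div_assoc]
    rw [← intervalIntegral.integral_Iic_add_Ioi j₁ j₄, ← hU,
      setIntegral_union Set.Ioc_disjoint_Ioi_same measurableSet_Ioi j₂ j₃, i₁, i₂, i₃, add_assoc]

/-- The likelihood ratio of `Lap1' m b` with respect to `Lap1' 0 b`. -/
noncomputable def laplaceRatio (m b x : ℝ) : ℝ := exp ((|x| - |x - m|) / b)

lemma laplaceRatio_pos (m b x : ℝ) : 0 < laplaceRatio m b x := exp_pos _

lemma continuous_laplaceRatio (m b : ℝ) : Continuous (laplaceRatio m b) := by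
  unfold laplaceRatio
  fun_prop

lemma laplaceRatio_le {b : ℝ} (hb : 0 < b) (m x : ℝ) : laplaceRatio m b x ≤ exp (|m| / b) := by
  unfold laplaceRatio
  gcongr
  simpa using abs_sub_abs_le_abs_sub x (x - m)

lemma isProbabilityMeasure_Lap1' {b : ℝ} (hb : 0 < b) (m : ℝ) :
    IsProbabilityMeasure (Lap1' m b) := by
  have hb' := inv_pos.2 hb
  obtain ⟨hi, hv⟩ := integrable_and_integral_of_eq_exp_pieces
    (f := fun x => (2 * b)⁻¹ * exp (-|x| / b)) (a := 0) (p := b⁻¹) (k := b⁻¹) (q := b⁻¹)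
    (u := (2 * b)⁻¹) (v := 0) (w := (2 * b)⁻¹) le_rfl hb' hb' hb'
    (fun x hx => by rw [abs_of_nonpos hx]; congr 2; ring)
    (fun x hx hx' => by linarith)
    (fun x hx => by rw [abs_of_pos hx]; congr 2; ring)
  constructor
  rw [Lap1', withDensity_apply _ MeasurableSet.univ, setLIntegral_univ,
    ← ofReal_integral_eq_lintegral_ofReal (hi.comp_sub_right m)
      (Filter.Eventually.of_forall fun x => by positivity),
    integral_sub_right_eq_self (fun x => (2 * b)⁻¹ * exp (-|x| / b)) m, hv]
  simp only [zero_mul, mul_zero, exp_zero, zero_div]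
  rw [show (2 * b)⁻¹ / b⁻¹ + 0 + (2 * b)⁻¹ * 1 / b⁻¹ = 1 by field_simp; norm_num]
  simp

lemma integral_Lap1' {b : ℝ} (hb : 0 < b) (m : ℝ) (g : ℝ → ℝ) :
    ∫ x, g x ∂(Lap1' m b) = ∫ x, (2 * b)⁻¹ * exp (-|x - m| / b) * g x := by
  rw [Lap1', integral_withDensity_eq_integral_toReal_smul (by fun_prop) (by simp)]
  refine integral_congr_ae (Filter.Eventually.of_forall fun x => ?_)
  simp only [smul_eq_mul]
  rw [ENNReal.toReal_ofReal (by positivity)]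

lemma Lap1'_eq_withDensity (m b : ℝ) :
    Lap1' m b = (Lap1' 0 b).withDensity (fun x => ENNReal.ofReal (laplaceRatio m b x)) := by
  have := (continuous_laplaceRatio m b).measurable
  rw [Lap1', Lap1', ← MeasureTheory.withDensity_mul _ (by fun_prop) (by fun_prop)]
  congr 1
  ext x
  rw [Pi.mul_apply, ← ENNReal.ofReal_mul' (laplaceRatio_pos m b x).le, laplaceRatio, mul_assoc,
    ← exp_add]
  congr 4
  rw [sub_zero]
  ring

lemma integral_laplaceRatio_self {b : ℝ} (hb : 0 < b) (m : ℝ) :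
    ∫ x, laplaceRatio m b x ∂(Lap1' m b) =
      2 / 3 * exp (|m| / b) + 1 / 3 * exp (-(2 * (|m| / b))) := by
  wlog hm : 0 ≤ m generalizing m with H
  · have := H (-m) (by linarith)
    rw [abs_neg] at this
    rw [← this, integral_Lap1' hb, integral_Lap1' hb, ← integral_neg_eq_self]
    refine integral_congr_ae (Filter.Eventually.of_forall fun x => ?_)
    simp only [laplaceRatio]
    rw [show -x - m = -(x - -m) by ring, abs_neg, abs_neg]
  have hb' := inv_pos.2 hb
  rw [integral_Lap1' hb, abs_of_nonneg hm, (integrable_and_integral_of_eq_exp_pieces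
    (a := m) (p := b⁻¹) (k := 3 * b⁻¹) (q := b⁻¹)
    (u := (2 * b)⁻¹ * exp (-(2 * (m / b)))) (v := (2 * b)⁻¹ * exp (-(2 * (m / b))))
    (w := (2 * b)⁻¹ * exp (2 * (m / b))) hm hb' (by positivity) hb' ?_ ?_ ?_).2]
  · have h : exp (m / b) = exp (-(2 * (m / b))) * exp (3 * b⁻¹ * m) := by
      rw [← exp_add]; congr 1; ring
    have h' : exp (m / b) = exp (2 * (m / b)) * exp (-b⁻¹ * m) := by
      rw [← exp_add]; congr 1; ring
    rw [show 2 / 3 * exp (m / b) = 1 / 6 * exp (m / b) + 1 / 2 * exp (m / b) by ring]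
    nth_rw 1 [h]
    rw [h']
    field_simp
    ring
  · intro x hx
    rw [laplaceRatio, abs_of_nonpos hx, abs_of_nonpos (by linarith), mul_assoc, mul_assoc,
      ← exp_add, ← exp_add]
    congr 2; ring
  · intro x hx hx'
    rw [laplaceRatio, abs_of_pos hx, abs_of_nonpos (by linarith), mul_assoc, mul_assoc,
      ← exp_add, ← exp_add]
    congr 2; ring
  · intro x hx
    rw [laplaceRatio, abs_of_pos (by linarith), abs_of_pos (by linarith), mul_assoc, mul_assoc,
      ← exp_add, ← exp_add]
    congr 2; ring

lemma integral_laplaceRatio_neg {b : ℝ} (hb : 0 < b) (m : ℝ) :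
    ∫ x, laplaceRatio (-m) b x ∂(Lap1' m b) =
      2 * exp (-(|m| / b)) - exp (-(2 * (|m| / b))) := by
  wlog hm : 0 ≤ m generalizing m with H
  · have := H (-m) (by linarith)
    rw [abs_neg, neg_neg] at this
    rw [← this, integral_Lap1' hb, integral_Lap1' hb, ← integral_neg_eq_self]
    refine integral_congr_ae (Filter.Eventually.of_forall fun x => ?_)
    simp only [laplaceRatio]
    rw [show -x - m = -(x - -m) by ring, show -x - -m = -(x - m) by ring, abs_neg, abs_neg,
      abs_neg]
  have hb' := inv_pos.2 hb
  let g : ℝ → ℝ := fun t => (2 * b)⁻¹ * exp ((t - |t - m| - |t + m|) / b)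
  have hg : ∀ x, (2 * b)⁻¹ * exp (-|x - m| / b) * laplaceRatio (-m) b x = g |x| := by
    intro x
    simp only [g, laplaceRatio]
    rw [mul_assoc, ← exp_add]
    congr 2
    rcases le_total 0 x with h | h
    · rw [abs_of_nonneg h, sub_neg_eq_add]; ring
    · rw [abs_of_nonpos h, show -x - m = -(x + m) by ring, show -x + m = -(x - m) by ring,
        abs_neg, abs_neg, sub_neg_eq_add]; ring
  rw [integral_Lap1' hb, integral_congr_ae (Filter.Eventually.of_forall hg), integral_comp_abs,
    ← integral_indicator measurableSet_Ioi, abs_of_nonneg hm,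
    (integrable_and_integral_of_eq_exp_pieces
    (a := m) (p := b⁻¹) (k := b⁻¹) (q := b⁻¹)
    (u := 0) (v := (2 * b)⁻¹ * exp (-(2 * (m / b))))
    (w := (2 * b)⁻¹) hm hb' hb' hb' ?_ ?_ ?_).2]
  · have h : exp (-(m / b)) = exp (-(2 * (m / b))) * exp (b⁻¹ * m) := by
      rw [← exp_add]; congr 1; ring
    rw [two_mul (exp (-(m / b)))]
    nth_rw 1 [h]
    rw [show -b⁻¹ * m = -(m / b) by ring]
    field_simp
    ring
  · intro x hx
    simp [hx]
  · intro x hx hx'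
    rw [Set.indicator_of_mem (Set.mem_Ioi.2 hx)]
    simp only [g]
    rw [abs_of_nonpos (by linarith), abs_of_pos (by linarith), mul_assoc, ← exp_add]
    congr 2; ring
  · intro x hx
    rw [Set.indicator_of_mem (Set.mem_Ioi.2 (by linarith))]
    simp only [g]
    rw [abs_of_pos (by linarith), abs_of_pos (by linarith)]
    congr 2; ring

lemma exp_neg_le_quadratic {t : ℝ} (h₀ : 0 ≤ t) : exp (-t) ≤ 1 - t + t ^ 2 / 2 := by
  have hq := Real.quadratic_le_exp_of_nonneg h₀
  have h1 : exp t * exp (-t) = 1 := by rw [← exp_add]; simp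
  nlinarith [exp_pos (-t), exp_pos t, sq_nonneg (t ^ 2), sq_nonneg (t - 1)]

lemma laplace_self_moment_le {t : ℝ} (h₀ : 0 ≤ t) (h₁ : t ≤ 1) :
    2 / 3 * exp t + 1 / 3 * exp (-(2 * t)) ≤ 1 + t ^ 2 := by
  have h := Real.exp_bound' h₀ h₁ (n := 3) (by norm_num)
  norm_num [Finset.sum_range_succ, Nat.factorial] at h
  have hn := exp_neg_le_quadratic h₀
  have h2 : exp (-(2 * t)) ≤ (1 - t + t ^ 2 / 2) ^ 2 := by
    rw [show -(2 * t) = -t + -t by ring, exp_add, sq]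
    exact mul_self_le_mul_self (exp_pos _).le hn
  nlinarith [pow_nonneg h₀ 3, mul_nonneg (pow_nonneg h₀ 3) (sub_nonneg.2 h₁)]

lemma laplace_cross_moment_le {t : ℝ} (h₀ : 0 ≤ t) (h₁ : t ≤ 1) :
    2 * exp (-t) - exp (-(2 * t)) ≤ 1 - t ^ 2 + t ^ 3 := by
  have hn := exp_neg_le_quadratic h₀
  rw [show -(2 * t) = -t + -t by ring, exp_add]
  have : 0 ≤ t - t ^ 2 / 2 := by nlinarith
  nlinarith [sq_nonneg (t ^ 2), mul_self_le_mul_self this (by linarith : t - t ^ 2 / 2 ≤ 1 - exp (-t))]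

lemma Lap2'_eq_withDensity {b : ℝ} (hb : 0 < b) (m₁ m₂ : ℝ) :
    Lap2' m₁ m₂ b = (Lap2' 0 0 b).withDensity
      (fun z => ENNReal.ofReal (laplaceRatio m₁ b z.1 * laplaceRatio m₂ b z.2)) := by
  have := isProbabilityMeasure_Lap1' hb 0
  have h₁ := (continuous_laplaceRatio m₁ b).measurable
  have h₂ := (continuous_laplaceRatio m₂ b).measurable
  rw [Lap2', Lap2', Lap1'_eq_withDensity m₁, Lap1'_eq_withDensity m₂,
    MeasureTheory.prod_withDensity (by fun_prop) (by fun_prop)]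
  congr 1
  ext z
  rw [ENNReal.ofReal_mul (laplaceRatio_pos _ _ _).le]

lemma integrable_laplaceRatio_mul {b : ℝ} (hb : 0 < b) (m₁ m₂ : ℝ) (P : Measure (ℝ × ℝ))
    [IsFiniteMeasure P] :
    Integrable (fun z : ℝ × ℝ => laplaceRatio m₁ b z.1 * laplaceRatio m₂ b z.2) P := by
  have h₁ := continuous_laplaceRatio m₁ b
  have h₂ := continuous_laplaceRatio m₂ b
  refine MeasureTheory.Integrable.of_bound (by fun_prop) (exp (|m₁| / b) * exp (|m₂| / b))
    (Filter.Eventually.of_forall fun z => ?_)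
  rw [Real.norm_of_nonneg (mul_pos (laplaceRatio_pos _ _ _) (laplaceRatio_pos _ _ _)).le]
  exact mul_le_mul (laplaceRatio_le hb _ _) (laplaceRatio_le hb _ _) (laplaceRatio_pos _ _ _).le
    (exp_pos _).le

/-- The Kullback–Leibler divergence is at most the chi-squared divergence, hence at most any
nonnegative bound for the latter. -/
lemma integral_log_rnDeriv_le {Ω : Type*} [MeasurableSpace Ω] {P Q : Measure Ω} [SigmaFinite Q]
    [IsProbabilityMeasure P] {r : Ω → ℝ} (hr : Measurable r) (hpos : ∀ z, 0 < r z)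
    (hP : P = Q.withDensity (fun z => ENNReal.ofReal (r z)))
    (hint : Integrable r P)
    {C : ℝ} (hC₀ : 0 ≤ C) (hC : ∫ z, r z ∂P - 1 ≤ C) :
    ∫ z, log (P.rnDeriv Q z).toReal ∂P ≤ C := by
  have hac : P ≪ Q := hP ▸ withDensity_absolutelyContinuous _ _
  have hd : ∀ᵐ z ∂P, log (P.rnDeriv Q z).toReal = log (r z) := by
    refine hac.ae_le ?_
    have := Measure.rnDeriv_withDensity Q (f := fun z => ENNReal.ofReal (r z)) (by fun_prop)
    rw [← hP] at this
    filter_upwards [this] with z hz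
    rw [hz, ENNReal.toReal_ofReal (hpos z).le]
  rw [integral_congr_ae hd]
  by_cases hlog : Integrable (fun z => log (r z)) P
  · have : ∫ z, r z ∂P - 1 = ∫ z, (r z - 1) ∂P := by
      rw [integral_sub hint (integrable_const _)]; simp
    refine le_trans ?_ (this ▸ hC)
    exact integral_mono hlog (hint.sub (integrable_const _))
      fun z => log_le_sub_one_of_pos (hpos z)
  · rwa [integral_undef hlog]

lemma product_moment_le {A₁ A₂ B₁ B₂ s t : ℝ} (hs₀ : 0 ≤ s) (ht₀ : 0 ≤ t) (hst : s + t ≤ 1)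
    (hA₂' : 0 ≤ A₂) (hB₁' : 0 ≤ B₁) (hB₂' : 0 ≤ B₂)
    (hA₁ : A₁ ≤ 1 + s ^ 2) (hA₂ : A₂ ≤ 1 + t ^ 2)
    (hB₁ : B₁ ≤ 1 - s ^ 2 + s ^ 3) (hB₂ : B₂ ≤ 1 - t ^ 2 + t ^ 3) :
    A₁ * A₂ + B₁ * B₂ - 2 ≤ 2 * (s + t) ^ 3 := by
  have hA : A₁ * A₂ ≤ (1 + s ^ 2) * (1 + t ^ 2) := mul_le_mul hA₁ hA₂ hA₂' (by positivity)
  have hB : B₁ * B₂ ≤ (1 - s ^ 2 + s ^ 3) * (1 - t ^ 2 + t ^ 3) :=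
    mul_le_mul hB₁ hB₂ hB₂' (hB₁'.trans hB₁)
  have e₁ : 0 ≤ s ^ 2 * t * (1 - t) := mul_nonneg (by positivity) (by linarith)
  have e₂ : 0 ≤ s ^ 2 * t ^ 3 * (1 - s) := mul_nonneg (by positivity) (by linarith)
  have e₃ : 0 ≤ s ^ 3 * t ^ 2 := by positivity
  have e₄ : 0 ≤ s ^ 3 := by positivity
  have e₅ : 0 ≤ t ^ 3 := by positivity
  have e₆ : 0 ≤ s * t ^ 2 := by positivity
  have e₇ : 0 ≤ s ^ 2 * t := by positivity
  linarith

/-- for `α ∈ (0,1]` and `‖μ‖₁ ≤ 1`, the KL divergence between the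
symmetric two-component Laplace mixture `P₊₋ = ½ Lap₂(μ, α⁻¹) + ½ Lap₂(−μ, α⁻¹)`
and the centered Laplace `P₀ = Lap₂(0, α⁻¹)` satisfies
`KL(P₊₋ ‖ P₀) ≤ 16.7 α³ ‖μ‖₁³`, where `KL(P‖Q) = ∫ log (dP/dQ) dP`. -/
theorem kl_laplace_mixture_le (α μ₁ μ₂ : ℝ) (hα : α ∈ Set.Ioc (0 : ℝ) 1)
    (hμ : |μ₁| + |μ₂| ≤ 1) :
    (∫ x, Real.log
        ((((1 / 2 : ℝ≥0∞) • Lap2' μ₁ μ₂ α⁻¹ + (1 / 2 : ℝ≥0∞) • Lap2' (-μ₁) (-μ₂) α⁻¹).rnDeriv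
              (Lap2' 0 0 α⁻¹) x).toReal)
      ∂((1 / 2 : ℝ≥0∞) • Lap2' μ₁ μ₂ α⁻¹ + (1 / 2 : ℝ≥0∞) • Lap2' (-μ₁) (-μ₂) α⁻¹))
      ≤ 16.7 * α ^ 3 * (|μ₁| + |μ₂|) ^ 3 := by
  obtain ⟨hα₀, hα₁⟩ := hα
  have hb : 0 < α⁻¹ := inv_pos.2 hα₀
  generalize hbα : α⁻¹ = b at *
  have hα' : α = b⁻¹ := by rw [← hbα, inv_inv]
  have hL : ∀ m, IsProbabilityMeasure (Lap1' m b) := isProbabilityMeasure_Lap1' hb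
  have hL₂ : ∀ m n, IsProbabilityMeasure (Lap2' m n b) := fun m n => by
    unfold Lap2'; infer_instance
  set P := (1 / 2 : ℝ≥0∞) • Lap2' μ₁ μ₂ b + (1 / 2 : ℝ≥0∞) • Lap2' (-μ₁) (-μ₂) b with hPdef
  have hP : IsProbabilityMeasure P := ⟨by
    simp only [hPdef, Measure.add_apply, Measure.smul_apply, measure_univ, smul_eq_mul, mul_one]
    exact ENNReal.add_halves 1⟩
  let w : ℝ → ℝ → ℝ × ℝ → ℝ := fun m n z => laplaceRatio m b z.1 * laplaceRatio n b z.2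
  have hw_cont : ∀ m n, Continuous (w m n) := fun m n => by
    have h₁ := continuous_laplaceRatio m b
    have h₂ := continuous_laplaceRatio n b
    fun_prop
  have hw_pos : ∀ m n z, 0 < w m n z := fun m n z =>
    mul_pos (laplaceRatio_pos _ _ _) (laplaceRatio_pos _ _ _)
  have hw_int : ∀ m n (R : Measure (ℝ × ℝ)) [IsFiniteMeasure R], Integrable (w m n) R :=
    fun m n R _ => integrable_laplaceRatio_mul hb m n R
  let r : ℝ × ℝ → ℝ := fun z => 1 / 2 * w μ₁ μ₂ z + 1 / 2 * w (-μ₁) (-μ₂) z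
  have hr_int : ∀ (R : Measure (ℝ × ℝ)) [IsFiniteMeasure R], Integrable r R := fun R _ =>
    ((hw_int _ _ R).const_mul _).add ((hw_int _ _ R).const_mul _)
  have hr_pos : ∀ z, 0 < r z := fun z => by
    have h₁ := hw_pos μ₁ μ₂ z
    have h₂ := hw_pos (-μ₁) (-μ₂) z
    positivity
  have hr_meas : Measurable r := by
    have h₁ := (hw_cont μ₁ μ₂).measurable
    have h₂ := (hw_cont (-μ₁) (-μ₂)).measurable
    fun_prop
  have hPr : P = (Lap2' 0 0 b).withDensity (fun z => ENNReal.ofReal (r z)) := by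
    have h₁ := (hw_cont μ₁ μ₂).measurable.ennreal_ofReal
    have h₂ := (hw_cont (-μ₁) (-μ₂)).measurable.ennreal_ofReal
    rw [hPdef, Lap2'_eq_withDensity hb μ₁, Lap2'_eq_withDensity hb (-μ₁),
      ← MeasureTheory.withDensity_smul _ h₁, ← MeasureTheory.withDensity_smul _ h₂,
      ← MeasureTheory.withDensity_add_left (h₁.const_smul _)]
    congr 1
    ext z
    have hhalf : ENNReal.ofReal (1 / 2) = 1 / 2 := by
      rw [ENNReal.ofReal_div_of_pos two_pos]; simp
    simp only [r, Pi.add_apply, Pi.smul_apply, smul_eq_mul]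
    rw [ENNReal.ofReal_add (mul_pos one_half_pos (hw_pos _ _ _)).le
      (mul_pos one_half_pos (hw_pos _ _ _)).le, ENNReal.ofReal_mul one_half_pos.le,
      ENNReal.ofReal_mul one_half_pos.le, hhalf]
  have hcross : ∀ m n k l, ∫ z, w k l z ∂(Lap2' m n b) =
      (∫ x, laplaceRatio k b x ∂(Lap1' m b)) * ∫ x, laplaceRatio l b x ∂(Lap1' n b) :=
    fun m n k l => MeasureTheory.integral_prod_mul _ _
  have hrint : ∀ m n, ∫ z, r z ∂(Lap2' m n b) = 1 / 2 * (∫ z, w μ₁ μ₂ z ∂(Lap2' m n b)) +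
      1 / 2 * ∫ z, w (-μ₁) (-μ₂) z ∂(Lap2' m n b) := fun m n => by
    simp only [r]
    rw [integral_add ((hw_int _ _ _).const_mul _) ((hw_int _ _ _).const_mul _),
      integral_const_mul, integral_const_mul]
  have hPint : ∫ z, r z ∂P = 1 / 2 * (∫ z, r z ∂(Lap2' μ₁ μ₂ b)) +
      1 / 2 * ∫ z, r z ∂(Lap2' (-μ₁) (-μ₂) b) := by
    rw [hPdef, integral_add_measure ((hr_int _).smul_measure (by simp))
      ((hr_int _).smul_measure (by simp)), MeasureTheory.integral_smul_measure,
      MeasureTheory.integral_smul_measure]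
    simp
  have hneg := fun m => integral_laplaceRatio_neg hb (-m)
  simp only [neg_neg, abs_neg] at hneg
  have hb_eq : ∀ m : ℝ, |m| / b = |m| * α := fun m => by rw [hα', div_eq_mul_inv]
  have hle₁ : |μ₁| * α ≤ 1 := by nlinarith [abs_nonneg μ₁, abs_nonneg μ₂]
  have hle₂ : |μ₂| * α ≤ 1 := by nlinarith [abs_nonneg μ₁, abs_nonneg μ₂]
  have hs₁ : 0 ≤ |μ₁| * α := by positivity
  have hs₂ : 0 ≤ |μ₂| * α := by positivity
  have hB : ∀ m, 0 ≤ ∫ x, laplaceRatio (-m) b x ∂(Lap1' m b) := fun m =>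
    integral_nonneg fun x => (laplaceRatio_pos _ _ _).le
  have hA₂ : 0 ≤ ∫ x, laplaceRatio μ₂ b x ∂(Lap1' μ₂ b) :=
    integral_nonneg fun x => (laplaceRatio_pos _ _ _).le
  have hB₁ := hB μ₁
  have hB₂ := hB μ₂
  rw [integral_laplaceRatio_self hb, hb_eq] at hA₂
  rw [integral_laplaceRatio_neg hb, hb_eq] at hB₁ hB₂
  have key := product_moment_le hs₁ hs₂ (by nlinarith [abs_nonneg μ₁, abs_nonneg μ₂])
    hA₂ hB₁ hB₂ (laplace_self_moment_le hs₁ hle₁) (laplace_self_moment_le hs₂ hle₂)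
    (laplace_cross_moment_le hs₁ hle₁) (laplace_cross_moment_le hs₂ hle₂)
  have hval : ∫ z, r z ∂P ≤ 1 + (α * (|μ₁| + |μ₂|)) ^ 3 := by
    rw [hPint, hrint, hrint, hcross, hcross, hcross, hcross, hneg, hneg,
      integral_laplaceRatio_self hb, integral_laplaceRatio_self hb,
      integral_laplaceRatio_self hb, integral_laplaceRatio_self hb,
      integral_laplaceRatio_neg hb, integral_laplaceRatio_neg hb, abs_neg, abs_neg, hb_eq, hb_eq]
    linarith
  have hpos : 0 ≤ α ^ 3 * (|μ₁| + |μ₂|) ^ 3 := by positivity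
  rw [mul_pow] at hval
  exact integral_log_rnDeriv_le hr_meas hr_pos hPr (hr_int P)
    (by norm_num; linarith) (by norm_num; linarith)
end

section
/- Let α ∈ (0,1], c ∈ (0, 1/2] and n ≥ 1. Define two probability distributions on ℝ³: P₁ = ½·Lap_3((1/2, c n^{−1/3}, 0), α⁻¹) + ½·Lap_3((1/2, −c n^{−1/3}, 0), α⁻¹) and P₂ = ½·Lap_3((1/2, c n^{−1/3}, c n^{−1/3}), α⁻¹) + ½·Lap_3((1/2, −c n^{−1/3}, −c n^{−1/3}), α⁻¹). Then the total variation distance between the n-fold product measures satisfies ‖P₁^{⊗n} − P₂^{⊗n}‖_TV ≤ 11.1 · c^{3/2} · α^{3/2}. -/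
open MeasureTheory Real
open scoped ENNReal

/-- The `d`-dimensional Laplace distribution with independent coordinates,
mean vector `m` and common scale `b`. -/
noncomputable def LapVec (d : ℕ) (m : Fin d → ℝ) (b : ℝ) : Measure (Fin d → ℝ) :=
  Measure.pi (fun i => Lap1' (m i) b)

/-- Total variation distance between two measures. -/
noncomputable def tvDist {Ω : Type*} [MeasurableSpace Ω] (P Q : Measure Ω) : ℝ :=
  ⨆ S : {S : Set Ω // MeasurableSet S}, |(P S.1).toReal - (Q S.1).toReal|

/-- A product of measures with real densities has the product density. -/
theorem pi_withDensity_ofReal {ι : Type*} [Fintype ι] {X : ι → Type*}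
    [∀ i, MeasurableSpace (X i)] (μ : ∀ i, Measure (X i)) [∀ i, SigmaFinite (μ i)]
    (f : ∀ i, X i → ℝ) (hf : ∀ i, Integrable (f i) (μ i)) (hf0 : ∀ i x, 0 ≤ f i x) :
    Measure.pi (fun i => (μ i).withDensity (fun x => ENNReal.ofReal (f i x)))
      = (Measure.pi μ).withDensity (fun x => ENNReal.ofReal (∏ i, f i (x i))) := by
  have := fun i => SigmaFinite.withDensity_of_ne_top (μ := μ i)
    (f := fun x => ENNReal.ofReal (f i x)) (ae_of_all _ fun x => ENNReal.ofReal_ne_top)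
  refine Measure.pi_eq fun s hs => ?_
  rw [withDensity_apply _ (MeasurableSet.univ_pi hs), Measure.restrict_pi_pi,
    ← ofReal_integral_eq_lintegral_ofReal
      (Integrable.fintype_prod_dep fun i => (hf i).restrict)
      (ae_of_all _ fun x => Finset.prod_nonneg fun i _ => hf0 i _),
    integral_fintype_prod_eq_prod,
    ENNReal.ofReal_prod_of_nonneg fun i _ => integral_nonneg (hf0 i)]
  refine Finset.prod_congr rfl fun i _ => ?_
  rw [withDensity_apply _ (hs i), ofReal_integral_eq_lintegral_ofReal (hf i).restrict
    (ae_of_all _ (hf0 i))]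

theorem tvDist_withDensity_le {Ω : Type*} [MeasurableSpace Ω] (P : Measure Ω)
    [IsProbabilityMeasure P] {R : Ω → ℝ} (hR : Measurable R) (hR0 : ∀ x, 0 ≤ R x) {M : ℝ}
    (hM : ∀ x, R x ≤ M) (h1 : ∫ x, R x ∂P = 1) {D : ℝ} (h2 : ∫ x, R x ^ 2 ∂P ≤ 1 + D) :
    tvDist P (P.withDensity fun x => ENNReal.ofReal (R x)) ≤ √D := by
  have hb : ∀ x, ‖R x‖ ≤ M := fun x => by rw [Real.norm_of_nonneg (hR0 x)]; exact hM x
  have hL : MemLp R 2 P := MemLp.of_bound hR.aestronglyMeasurable M (ae_of_all _ hb)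
  have hi : Integrable R P := hL.integrable (by norm_num)
  have hL' : MemLp (fun x => |R x - 1|) 2 P := (hL.sub (memLp_const 1)).abs
  have hi' : Integrable (fun x => R x - 1) P := hi.sub (integrable_const 1)
  have hsq : (∫ x, |R x - 1| ∂P) ^ 2 ≤ D := by
    have hv := ProbabilityTheory.variance_nonneg (fun x => |R x - 1|) P
    rw [ProbabilityTheory.variance_eq_sub hL'] at hv
    have he : ∫ x, ((fun x => |R x - 1|) ^ 2) x ∂P = ∫ x, R x ^ 2 ∂P - 1 := by
      have : ∀ x, ((fun x => |R x - 1|) ^ 2) x = R x ^ 2 - (2 * R x - 1) := fun x => by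
        simp only [Pi.pow_apply, sq_abs]; ring
      simp only [this]
      have hi2 : Integrable (fun x => 2 * R x - 1) P :=
        (hi.const_mul 2).sub (integrable_const 1)
      rw [integral_sub hL.integrable_sq hi2, integral_sub (hi.const_mul 2) (integrable_const 1), integral_const_mul, h1]
      simp; norm_num
    rw [he] at hv
    linarith
  have : Nonempty {S : Set Ω // MeasurableSet S} := ⟨⟨∅, MeasurableSet.empty⟩⟩
  refine ciSup_le fun ⟨S, hS⟩ => ?_
  have hQ : ((P.withDensity fun x => ENNReal.ofReal (R x)) S).toReal = ∫ x in S, R x ∂P := by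
    rw [withDensity_apply _ hS,
      ← ofReal_integral_eq_lintegral_ofReal hi.restrict (ae_of_all _ hR0),
      ENNReal.toReal_ofReal (integral_nonneg hR0)]
  have hP : (P S).toReal = ∫ x in S, (1 : ℝ) ∂P := by simp [Measure.real]
  rw [hQ, hP, abs_sub_comm, ← integral_sub hi.restrict (integrable_const 1)]
  refine (abs_integral_le_integral_abs.trans ?_).trans (Real.le_sqrt_of_sq_le hsq)
  exact setIntegral_le_integral hi'.abs (ae_of_all _ fun x => abs_nonneg _)

/-- The `χ²` bound on the total variation distance, tensorized. -/
theorem tvDist_pi_withDensity_le {Ω : Type*} [MeasurableSpace Ω] (P : Measure Ω)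
    [IsProbabilityMeasure P] {r : Ω → ℝ} (hr : Measurable r) (hr0 : ∀ x, 0 ≤ r x) {M : ℝ}
    (hM : ∀ x, r x ≤ M) [IsProbabilityMeasure (P.withDensity fun x => ENNReal.ofReal (r x))]
    {D : ℝ} (hD : ∫ x, (r x - 1) ^ 2 ∂P ≤ D) (n : ℕ) :
    tvDist (Measure.pi fun _ : Fin n => P)
        (Measure.pi fun _ : Fin n => P.withDensity fun x => ENNReal.ofReal (r x))
      ≤ √((1 + D) ^ n - 1) := by
  have hb : ∀ x, ‖r x‖ ≤ M := fun x => by rw [Real.norm_of_nonneg (hr0 x)]; exact hM x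
  have hL : MemLp r 2 P := MemLp.of_bound hr.aestronglyMeasurable M (ae_of_all _ hb)
  have hi : Integrable r P := hL.integrable (by norm_num)
  have h1 : ∫ x, r x ∂P = 1 := by
    have := measure_univ (μ := P.withDensity fun x => ENNReal.ofReal (r x))
    rwa [withDensity_apply _ MeasurableSet.univ, Measure.restrict_univ,
      ← ofReal_integral_eq_lintegral_ofReal hi (ae_of_all _ hr0), ENNReal.ofReal_eq_one] at this
  have h2 : ∫ x, r x ^ 2 ∂P ≤ 1 + D := by
    have : ∀ x, r x ^ 2 = (r x - 1) ^ 2 + (2 * r x - 1) := fun x => by ring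
    simp only [this]
    have hi2 : Integrable (fun x => 2 * r x - 1) P :=
      (hi.const_mul 2).sub (integrable_const 1)
    have hsq : Integrable (fun x => (r x - 1) ^ 2) P :=
      (hL.sub (memLp_const 1)).integrable_sq
    rw [integral_add hsq hi2, integral_sub (hi.const_mul 2) (integrable_const 1), integral_const_mul, h1]
    simp only [integral_const, probReal_univ, smul_eq_mul]
    linarith
  rw [pi_withDensity_ofReal (fun _ : Fin n => P) (fun _ => r) (fun _ => hi) (fun _ => hr0)]
  refine tvDist_withDensity_le (M := M ^ n) _ ?_ ?_ ?_ ?_ ?_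
  · fun_prop
  · exact fun x => Finset.prod_nonneg fun i _ => hr0 _
  · intro x
    simpa using Finset.prod_le_prod (s := Finset.univ) (fun i _ => hr0 (x i)) fun i _ => hM (x i)
  · rw [integral_fintype_prod_eq_prod (fun _ : Fin n => r)]
    simp [h1]
  · simp only [← Finset.prod_pow]
    rw [integral_fintype_prod_eq_prod (fun (_ : Fin n) x => r x ^ 2)]
    simp only [Finset.prod_const, Finset.card_univ, Fintype.card_fin]
    have := pow_le_pow_left₀ (integral_nonneg fun x => sq_nonneg (r x)) h2 n
    linarith

noncomputable def lapDensity (α m x : ℝ) : ℝ := α / 2 * exp (-(α * |x - m|))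

theorem Lap1'_inv_eq (α m : ℝ) :
    Lap1' m α⁻¹ = volume.withDensity fun x => ENNReal.ofReal (lapDensity α m x) := by
  unfold Lap1' lapDensity
  congr! 4 with x
  · rw [mul_inv, inv_inv, inv_mul_eq_div]
  · rw [div_inv_eq_mul, neg_mul, mul_comm]

theorem lapDensity_pos {α : ℝ} (hα : 0 < α) (m x : ℝ) : 0 < lapDensity α m x := by
  unfold lapDensity; positivity

theorem measurable_lapDensity (α m : ℝ) : Measurable (lapDensity α m) := by
  unfold lapDensity; fun_prop

theorem integral_lapDensity {α : ℝ} (hα : 0 < α) (m : ℝ) : ∫ x, lapDensity α m x = 1 := by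
  unfold lapDensity
  rw [integral_sub_right_eq_self (fun x => α / 2 * exp (-(α * |x|))) m,
    integral_comp_abs (f := fun x => α / 2 * exp (-(α * x))), integral_const_mul]
  have := integral_exp_mul_Ioi (neg_lt_zero.2 hα) 0
  simp only [neg_mul] at this
  rw [this]
  field_simp
  simp

theorem integrable_lapDensity {α : ℝ} (hα : 0 < α) (m : ℝ) : Integrable (lapDensity α m) :=
  Integrable.of_integral_ne_zero (by rw [integral_lapDensity hα]; exact one_ne_zero)

theorem isProbabilityMeasure_Lap1'_s4 {α : ℝ} (hα : 0 < α) (m : ℝ) :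
    IsProbabilityMeasure (Lap1' m α⁻¹) := by
  constructor
  rw [Lap1'_inv_eq, withDensity_apply _ MeasurableSet.univ, Measure.restrict_univ,
    ← ofReal_integral_eq_lintegral_ofReal (integrable_lapDensity hα m)
      (ae_of_all _ fun x => (lapDensity_pos hα m x).le), integral_lapDensity hα]
  simp

theorem isProbabilityMeasure_LapVec {α : ℝ} (hα : 0 < α) {d : ℕ} (m : Fin d → ℝ) :
    IsProbabilityMeasure (LapVec d m α⁻¹) := by
  have := fun i => isProbabilityMeasure_Lap1'_s4 hα (m i)
  unfold LapVec
  infer_instance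

theorem LapVec_inv_eq {α : ℝ} (hα : 0 < α) {d : ℕ} (m : Fin d → ℝ) :
    LapVec d m α⁻¹
      = volume.withDensity fun x => ENNReal.ofReal (∏ i, lapDensity α (m i) (x i)) := by
  unfold LapVec
  simp only [Lap1'_inv_eq]
  exact pi_withDensity_ofReal _ _ (fun i => integrable_lapDensity hα _)
    fun i x => (lapDensity_pos hα _ x).le

theorem LapVec_abs_lt_le {α : ℝ} (hα : 0 < α) {d : ℕ} (m : Fin d → ℝ) {j : Fin d}
    (s : ℝ) :
    LapVec d m α⁻¹ {x | |x j| < s} ≤ ENNReal.ofReal (α * s) := by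
  have := fun i => isProbabilityMeasure_Lap1'_s4 hα (m i)
  have hmeas : MeasurableSet {y : ℝ | |y| < s} :=
    measurableSet_lt measurable_id.abs measurable_const
  have hset : {y : ℝ | |y| < s} = Set.Ioo (-s) s := by
    ext y; simp [abs_lt]
  have heval := (measurePreserving_eval (fun i => Lap1' (m i) α⁻¹) j).measure_preimage
    hmeas.nullMeasurableSet
  change LapVec d m α⁻¹ {x | |x j| < s} = _ at heval
  rw [heval, Lap1'_inv_eq, withDensity_apply _ hmeas]
  calc ∫⁻ x in {y : ℝ | |y| < s}, ENNReal.ofReal (lapDensity α (m j) x)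
      ≤ ∫⁻ _ in {y : ℝ | |y| < s}, ENNReal.ofReal (α / 2) := by
        refine lintegral_mono fun x => ENNReal.ofReal_le_ofReal ?_
        unfold lapDensity
        refine mul_le_of_le_one_right (by positivity) (exp_le_one_iff.2 ?_)
        have := mul_nonneg hα.le (abs_nonneg (x - m j))
        linarith
    _ = ENNReal.ofReal (α * s) := by
        rw [setLIntegral_const, hset, Real.volume_Ioo,
          ← ENNReal.ofReal_mul (by positivity)]
        ring_nf

/-- The balanced mixture of two probability measures is a probability measure. -/
theorem isProbabilityMeasure_half_add_half {Ω : Type*} [MeasurableSpace Ω] (P Q : Measure Ω)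
    [IsProbabilityMeasure P] [IsProbabilityMeasure Q] :
    IsProbabilityMeasure ((1 / 2 : ℝ≥0∞) • P + (1 / 2 : ℝ≥0∞) • Q) :=
  ⟨by simp [ENNReal.inv_two_add_inv_two]⟩

theorem half_smul_LapVec_add_eq {α : ℝ} (hα : 0 < α) {d : ℕ} (m m' : Fin d → ℝ) :
    (1 / 2 : ℝ≥0∞) • LapVec d m α⁻¹ + (1 / 2 : ℝ≥0∞) • LapVec d m' α⁻¹
      = volume.withDensity fun x => ENNReal.ofReal
        ((∏ i, lapDensity α (m i) (x i) + ∏ i, lapDensity α (m' i) (x i)) / 2) := by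
  have hm (m : Fin d → ℝ) : Measurable fun x : Fin d → ℝ =>
      ENNReal.ofReal (∏ i, lapDensity α (m i) (x i)) :=
    (Finset.measurable_fun_prod _ fun i _ =>
      (measurable_lapDensity α (m i)).comp (measurable_pi_apply i)).ennreal_ofReal
  have hp (m x : Fin d → ℝ) : 0 ≤ ∏ i, lapDensity α (m i) (x i) :=
    Finset.prod_nonneg fun i _ => (lapDensity_pos hα _ _).le
  rw [LapVec_inv_eq hα, LapVec_inv_eq hα, ← smul_add, ← withDensity_add_left (hm m),
    ← withDensity_smul _ ((hm m).add (hm m'))]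
  congr 1
  funext x
  simp only [Pi.smul_apply, Pi.add_apply, smul_eq_mul]
  rw [← ENNReal.ofReal_add (hp m x) (hp m' x), div_eq_inv_mul _ (2 : ℝ),
    ENNReal.ofReal_mul (by norm_num), ENNReal.ofReal_inv_of_pos (by norm_num)]
  simp

/-- The density of the correlated mixture with respect to the uncorrelated one, as a function of
the last two coordinates. -/
noncomputable def mixtureRatio (α s x y : ℝ) : ℝ :=
  (exp (-(α * |x - s|)) * exp (α * (|y| - |y - s|))
      + exp (-(α * |x + s|)) * exp (α * (|y| - |y + s|)))
    / (exp (-(α * |x - s|)) + exp (-(α * |x + s|)))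

theorem mixtureRatio_pos (α s x y : ℝ) : 0 < mixtureRatio α s x y := by
  unfold mixtureRatio; positivity

theorem abs_mixtureRatio_sub_one_le {α s : ℝ} (hα : 0 < α) (hs : 0 < s) (h : α * s ≤ 1 / 2)
    (x y : ℝ) : |mixtureRatio α s x y - 1| ≤ 2 * (α * s) := by
  have key : ∀ z : ℝ, |z| ≤ s → |exp (α * z) - 1| ≤ 2 * (α * s) := fun z hz => by
    have h1 : |α * z| ≤ α * s := by
      rw [abs_mul, abs_of_pos hα]; exact mul_le_mul_of_nonneg_left hz hα.le
    linarith [Real.abs_exp_sub_one_le (x := α * z) (by linarith)]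
  have hp := key (|y| - |y - s|) (by
    have := abs_abs_sub_abs_le y (y - s); rwa [sub_sub_cancel, abs_of_pos hs] at this)
  have hq := key (|y| - |y + s|) (by
    have := abs_abs_sub_abs_le y (y + s)
    rwa [sub_add_cancel_left, abs_neg, abs_of_pos hs] at this)
  unfold mixtureRatio
  have hA := exp_pos (-(α * |x - s|))
  have hB := exp_pos (-(α * |x + s|))
  rw [div_sub_one (by positivity), abs_div, abs_of_pos (add_pos hA hB),
    div_le_iff₀ (by positivity)]
  rw [abs_le] at hp hq ⊢
  constructor <;> nlinarith

theorem abs_weighted_exp_sub_le {A B t : ℝ} (hA : 0 < A) (hB : 0 < B) (ht : 0 < t)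
    (ht' : t ≤ 1 / 2) (hAB : A ≤ B * exp (2 * t)) (hBA : B ≤ A * exp (2 * t)) :
    |(A * exp t + B * exp (-t)) / (A + B) - 1| ≤ 3 * t ^ 2 := by
  have h1 := Real.abs_exp_sub_one_sub_id_le (x := t) (by rw [abs_of_pos ht]; linarith)
  have h2 := Real.abs_exp_sub_one_sub_id_le (x := -t) (by rw [abs_neg, abs_of_pos ht]; linarith)
  have h3 := Real.abs_exp_sub_one_le (x := 2 * t) (by rw [abs_of_pos (by linarith)]; linarith)
  rw [abs_of_pos (by linarith : 0 < 2 * t)] at h3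
  have hd : |A - B| ≤ 2 * t * (A + B) := by
    have h4 := (abs_le.1 h3).2
    rw [abs_le]
    constructor
    · rcases le_total A B with h | h <;> nlinarith
    · rcases le_total A B with h | h <;> nlinarith
  rw [div_sub_one (by positivity), abs_div, abs_of_pos (add_pos hA hB),
    div_le_iff₀ (by positivity)]
  rw [abs_le] at h1 h2 hd ⊢
  constructor <;> nlinarith

theorem abs_mixtureRatio_sub_one_le_of_le_abs {α s : ℝ} (hα : 0 < α) (hs : 0 < s)
    (h : α * s ≤ 1 / 2) (x : ℝ) {y : ℝ} (hy : s ≤ |y|) :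
    |mixtureRatio α s x y - 1| ≤ 3 * (α * s) ^ 2 := by
  have hAB : exp (-(α * |x - s|)) ≤ exp (-(α * |x + s|)) * exp (2 * (α * s)) := by
    rw [← exp_add, exp_le_exp]
    have : |x + s| ≤ |x - s| + 2 * s := by
      have := abs_add_le (x - s) (2 * s)
      rw [abs_of_pos (by linarith : 0 < 2 * s)] at this
      rwa [show x - s + 2 * s = x + s by ring] at this
    nlinarith
  have hBA : exp (-(α * |x + s|)) ≤ exp (-(α * |x - s|)) * exp (2 * (α * s)) := by
    rw [← exp_add, exp_le_exp]
    have : |x - s| ≤ |x + s| + 2 * s := by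
      have := abs_sub (x + s) (2 * s)
      rw [abs_of_pos (by linarith : 0 < 2 * s)] at this
      rwa [show x + s - 2 * s = x - s by ring] at this
    nlinarith
  unfold mixtureRatio
  rcases le_abs'.1 hy with hy | hy
  · rw [abs_of_nonpos (by linarith : y ≤ 0), abs_of_nonpos (by linarith : y - s ≤ 0),
      abs_of_nonpos (by linarith : y + s ≤ 0),
      show α * (-y - -(y - s)) = -(α * s) by ring, show α * (-y - -(y + s)) = α * s by ring,
      add_comm (_ * _), add_comm (exp _) (exp _)]
    exact abs_weighted_exp_sub_le (exp_pos _) (exp_pos _) (by positivity) h hBA hAB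
  · rw [abs_of_nonneg (by linarith : 0 ≤ y), abs_of_nonneg (by linarith : 0 ≤ y - s),
      abs_of_nonneg (by linarith : 0 ≤ y + s),
      show α * (y - (y - s)) = α * s by ring, show α * (y - (y + s)) = -(α * s) by ring]
    exact abs_weighted_exp_sub_le (exp_pos _) (exp_pos _) (by positivity) h hAB hBA

theorem correlated_mixture_eq_withDensity {α : ℝ} (hα : 0 < α) (s : ℝ) :
    (1 / 2 : ℝ≥0∞) • LapVec 3 ![1 / 2, s, s] α⁻¹ + (1 / 2 : ℝ≥0∞) • LapVec 3 ![1 / 2, -s, -s] α⁻¹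
      = ((1 / 2 : ℝ≥0∞) • LapVec 3 ![1 / 2, s, 0] α⁻¹
          + (1 / 2 : ℝ≥0∞) • LapVec 3 ![1 / 2, -s, 0] α⁻¹).withDensity
        fun x => ENNReal.ofReal (mixtureRatio α s (x 1) (x 2)) := by
  rw [half_smul_LapVec_add_eq hα, half_smul_LapVec_add_eq hα, ← withDensity_mul]
  · congr 1
    funext x
    simp only [Pi.mul_apply, Fin.prod_univ_three, Matrix.cons_val_zero, Matrix.cons_val_one,
      Matrix.cons_val]
    have hpos := lapDensity_pos hα
    rw [← ENNReal.ofReal_mul (by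
      have := mul_pos (mul_pos (hpos (1 / 2) (x 0)) (hpos s (x 1))) (hpos 0 (x 2))
      have := mul_pos (mul_pos (hpos (1 / 2) (x 0)) (hpos (-s) (x 1))) (hpos 0 (x 2))
      linarith)]
    congr 1
    have hsplit : ∀ m, lapDensity α m (x 2)
        = lapDensity α 0 (x 2) * exp (α * (|x 2| - |x 2 - m|)) := fun m => by
      unfold lapDensity
      rw [mul_assoc, ← exp_add]
      congr 2
      rw [sub_zero]; ring
    rw [hsplit s, hsplit (-s)]
    unfold mixtureRatio
    have := exp_pos (-(α * |x 1 - s|))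
    have := exp_pos (-(α * |x 1 + s|))
    simp only [lapDensity, sub_neg_eq_add]
    field_simp
  · unfold lapDensity; fun_prop
  · unfold mixtureRatio; fun_prop

theorem integral_sq_mixtureRatio_sub_one_le {α s : ℝ} (hα : 0 < α) (hs : 0 < s)
    (h : α * s ≤ 1 / 2) :
    ∫ x : Fin 3 → ℝ, (mixtureRatio α s (x 1) (x 2) - 1) ^ 2
        ∂((1 / 2 : ℝ≥0∞) • LapVec 3 ![1 / 2, s, 0] α⁻¹
          + (1 / 2 : ℝ≥0∞) • LapVec 3 ![1 / 2, -s, 0] α⁻¹)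
      ≤ 9 * (α * s) ^ 3 := by
  have hp := fun m : Fin 3 → ℝ => isProbabilityMeasure_LapVec hα m
  have hP := isProbabilityMeasure_half_add_half (LapVec 3 ![1 / 2, s, 0] α⁻¹)
    (LapVec 3 ![1 / 2, -s, 0] α⁻¹)
  set P := (1 / 2 : ℝ≥0∞) • LapVec 3 ![1 / 2, s, 0] α⁻¹
    + (1 / 2 : ℝ≥0∞) • LapVec 3 ![1 / 2, -s, 0] α⁻¹ with hPdef
  set N : Set (Fin 3 → ℝ) := {x | |x 2| < s} with hN
  have hNm : MeasurableSet N := measurableSet_lt (by fun_prop) measurable_const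
  have ht : 0 < α * s := by positivity
  have hPN : P.real N ≤ α * s := by
    refine ENNReal.toReal_le_of_le_ofReal ht.le ?_
    calc P N = (1 / 2 : ℝ≥0∞) * LapVec 3 ![1 / 2, s, 0] α⁻¹ N
          + (1 / 2 : ℝ≥0∞) * LapVec 3 ![1 / 2, -s, 0] α⁻¹ N := by simp [hPdef]
      _ ≤ (1 / 2 : ℝ≥0∞) * ENNReal.ofReal (α * s) + (1 / 2 : ℝ≥0∞) * ENNReal.ofReal (α * s) := by
        gcongr <;> exact LapVec_abs_lt_le hα _ s
      _ = ENNReal.ofReal (α * s) := by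
        rw [← add_mul]; simp [ENNReal.inv_two_add_inv_two]
  have hind : Integrable (N.indicator fun _ => 4 * (α * s) ^ 2) P :=
    (integrable_const _).indicator hNm
  calc _ ≤ ∫ x, (N.indicator (fun _ => 4 * (α * s) ^ 2) x + 9 * (α * s) ^ 4) ∂P := by
        refine integral_mono_of_nonneg (ae_of_all _ fun x => sq_nonneg _)
          (hind.add (integrable_const _)) (ae_of_all _ fun x => ?_)
        by_cases hx : x ∈ N
        · simp only [Set.indicator_of_mem hx]
          have := sq_le_sq' (abs_le.1 (abs_mixtureRatio_sub_one_le hα hs h (x 1) (x 2))).1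
            (abs_le.1 (abs_mixtureRatio_sub_one_le hα hs h (x 1) (x 2))).2
          nlinarith [pow_pos ht 4]
        · simp only [Set.indicator_of_notMem hx]
          have hb := abs_mixtureRatio_sub_one_le_of_le_abs hα hs h (x 1) (not_lt.1 hx)
          have := sq_le_sq' (abs_le.1 hb).1 (abs_le.1 hb).2
          linarith
    _ = P.real N * (4 * (α * s) ^ 2) + 9 * (α * s) ^ 4 := by
        rw [integral_add hind (integrable_const _), integral_indicator_const _ hNm]
        simp
    _ ≤ (α * s) * (4 * (α * s) ^ 2) + 9 * (α * s) ^ 4 := by gcongr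
    _ ≤ 9 * (α * s) ^ 3 := by nlinarith [pow_pos ht 3]

/-- For `y = x ^ 3 / n` with `x ≤ 1 / 2`, a per-sample `χ²` divergence of `9 * y` leads to the
constant `11.1`. -/
theorem sqrt_one_add_pow_sub_one_le {x y : ℝ} {n : ℕ} (hx0 : 0 < x) (hx1 : x ≤ 1 / 2)
    (hy : 0 ≤ y) (hxy : n * y = x ^ 3) :
    √((1 + 9 * y) ^ n - 1) ≤ 11.1 * x ^ ((3 : ℝ) / 2) := by
  have hpow : (1 + 9 * y) ^ n ≤ exp (9 * x ^ 3) := by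
    calc (1 + 9 * y) ^ n ≤ exp (9 * y) ^ n := by
          gcongr; linarith [add_one_le_exp (9 * y)]
      _ = exp (9 * x ^ 3) := by rw [← exp_nat_mul, ← hxy]; ring_nf
  have hx3 : 0 < x ^ 3 := by positivity
  have hexp : exp (9 * x ^ 3) - 1 ≤ 123 * x ^ 3 := by
    have hx8 : x ^ 3 ≤ 1 / 8 := by
      calc x ^ 3 ≤ (1 / 2) ^ 3 := by gcongr
        _ = 1 / 8 := by norm_num
    have h1 := add_one_le_exp (-(9 * x ^ 3))
    have h2 : exp (9 * x ^ 3) ≤ 9 := by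
      calc exp (9 * x ^ 3) ≤ exp (1 + 1) := exp_le_exp.2 (by linarith)
        _ ≤ 9 := by rw [exp_add]; nlinarith [exp_one_lt_three, exp_pos 1]
    have h3 : exp (9 * x ^ 3) * exp (-(9 * x ^ 3)) = 1 := by
      rw [← exp_add]; simp
    nlinarith [exp_pos (9 * x ^ 3)]
  refine Real.sqrt_le_iff.2 ⟨by positivity, ?_⟩
  have hsq : (x ^ ((3 : ℝ) / 2)) ^ 2 = x ^ 3 := by
    rw [← Real.rpow_natCast, ← Real.rpow_mul hx0.le, ← Real.rpow_natCast]
    norm_num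
  rw [mul_pow, hsq]
  linarith

theorem tvDist_pi_mixture_le_sqrt {α s : ℝ} (hα : 0 < α) (hs : 0 < s) (h : α * s ≤ 1 / 2)
    (n : ℕ) :
    tvDist
      (Measure.pi (fun _ : Fin n =>
        (1 / 2 : ℝ≥0∞) • LapVec 3 ![1 / 2, s, 0] α⁻¹
          + (1 / 2 : ℝ≥0∞) • LapVec 3 ![1 / 2, -s, 0] α⁻¹))
      (Measure.pi (fun _ : Fin n =>
        (1 / 2 : ℝ≥0∞) • LapVec 3 ![1 / 2, s, s] α⁻¹
          + (1 / 2 : ℝ≥0∞) • LapVec 3 ![1 / 2, -s, -s] α⁻¹))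
      ≤ √((1 + 9 * (α * s) ^ 3) ^ n - 1) := by
  have hp := fun m : Fin 3 → ℝ => isProbabilityMeasure_LapVec hα m
  have hP := isProbabilityMeasure_half_add_half (LapVec 3 ![1 / 2, s, 0] α⁻¹)
    (LapVec 3 ![1 / 2, -s, 0] α⁻¹)
  have hQ := isProbabilityMeasure_half_add_half (LapVec 3 ![1 / 2, s, s] α⁻¹)
    (LapVec 3 ![1 / 2, -s, -s] α⁻¹)
  have hD := integral_sq_mixtureRatio_sub_one_le hα hs h
  rw [correlated_mixture_eq_withDensity hα] at hQ ⊢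
  generalize (1 / 2 : ℝ≥0∞) • LapVec 3 ![1 / 2, s, 0] α⁻¹
    + (1 / 2 : ℝ≥0∞) • LapVec 3 ![1 / 2, -s, 0] α⁻¹ = P at hP hQ hD ⊢
  have hr : Measurable fun x : Fin 3 → ℝ => mixtureRatio α s (x 1) (x 2) := by
    unfold mixtureRatio; fun_prop
  have hr2 : ∀ x : Fin 3 → ℝ, mixtureRatio α s (x 1) (x 2) ≤ 2 := fun x => by
    linarith [(abs_le.1 (abs_mixtureRatio_sub_one_le hα hs h (x 1) (x 2))).2]
  exact tvDist_pi_withDensity_le P hr (fun x => (mixtureRatio_pos _ _ _ _).le) hr2 hD n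

/-- the total variation distance between the `n`-fold products of the
two Laplace-perturbed mixtures
`P₁ = ½ Lap₃((1/2, cn^{-1/3}, 0), α⁻¹) + ½ Lap₃((1/2, −cn^{-1/3}, 0), α⁻¹)` and
`P₂ = ½ Lap₃((1/2, cn^{-1/3}, cn^{-1/3}), α⁻¹) + ½ Lap₃((1/2, −cn^{-1/3}, −cn^{-1/3}), α⁻¹)`
is at most `11.1 c^{3/2} α^{3/2}`. -/
theorem tv_product_laplace_mixtures_le (α c : ℝ) (hα : α ∈ Set.Ioc (0 : ℝ) 1)
    (hc : c ∈ Set.Ioc (0 : ℝ) (1 / 2)) (n : ℕ) (hn : 1 ≤ n) :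
    tvDist
      (Measure.pi (fun _ : Fin n =>
        (1 / 2 : ℝ≥0∞) • LapVec 3 ![1 / 2, c * (n : ℝ) ^ (-(1 / 3) : ℝ), 0] α⁻¹
          + (1 / 2 : ℝ≥0∞) • LapVec 3 ![1 / 2, -(c * (n : ℝ) ^ (-(1 / 3) : ℝ)), 0] α⁻¹))
      (Measure.pi (fun _ : Fin n =>
        (1 / 2 : ℝ≥0∞) • LapVec 3
              ![1 / 2, c * (n : ℝ) ^ (-(1 / 3) : ℝ), c * (n : ℝ) ^ (-(1 / 3) : ℝ)] α⁻¹
          + (1 / 2 : ℝ≥0∞) • LapVec 3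
              ![1 / 2, -(c * (n : ℝ) ^ (-(1 / 3) : ℝ)), -(c * (n : ℝ) ^ (-(1 / 3) : ℝ))] α⁻¹))
      ≤ 11.1 * c ^ ((3 : ℝ) / 2) * α ^ ((3 : ℝ) / 2) := by
  obtain ⟨hα0, hα1⟩ := hα
  obtain ⟨hc0, hc1⟩ := hc
  have hn0 : (0 : ℝ) < n := by exact_mod_cast hn
  have hs : 0 < c * (n : ℝ) ^ (-(1 / 3) : ℝ) := by positivity
  have hsc : c * (n : ℝ) ^ (-(1 / 3) : ℝ) ≤ c := mul_le_of_le_one_right hc0.le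
    (Real.rpow_le_one_of_one_le_of_nonpos (by exact_mod_cast hn) (by norm_num))
  have ht : α * (c * (n : ℝ) ^ (-(1 / 3) : ℝ)) ≤ 1 / 2 := by nlinarith
  have hcube : n * (α * (c * (n : ℝ) ^ (-(1 / 3) : ℝ))) ^ 3 = (c * α) ^ 3 := by
    have : ((n : ℝ) ^ (-(1 / 3) : ℝ)) ^ 3 = (n : ℝ)⁻¹ := by
      rw [← Real.rpow_natCast, ← Real.rpow_mul hn0.le, ← Real.rpow_neg_one]
      norm_num
    rw [mul_pow, mul_pow, this]
    field_simp
  rw [mul_assoc, ← Real.mul_rpow hc0.le hα0.le]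
  exact (tvDist_pi_mixture_le_sqrt hα0 hs ht n).trans
    (sqrt_one_add_pow_sub_one_le (by positivity) (by nlinarith) (by positivity) hcube)
end
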